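/- For r > 2 + √2, the stability function ψ(z) = (1 + (2/r) z + (1/r²) z²) / (1 − ((r−2)/r) z + ((r²−4r+2)/(2r²)) z²) satisfies ψ(z) = e^z + O(z³) as z → 0; precisely, ψ(z) = 1 + z + z²/2 + O(z³). -/

import Mathlib

open Filter Asymptotics

theorem dwrk_second_order (r : ℝ) (hr : 2 + Real.sqrt 2 < r) :
    (fun z : ℂ =>
        (1 + ((2 / r : ℝ)) * z + ((1 / r ^ 2 : ℝ)) * z ^ 2) /
            (1 - ((r - 2) / r : ℝ) * z + (((r ^ 2 - 4 * r + 2) / (2 * r ^ 2) : ℝ)) * z ^ 2)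
          - (1 + z + z ^ 2 / 2)) =O[nhds 0] (fun z : ℂ => z ^ 3) := by
  have hr0 : r ≠ 0 := by
    have := Real.sqrt_nonneg 2
    intro h
    linarith
  have h1 : (((2 / r : ℝ)) : ℂ) = 1 - (((r - 2) / r : ℝ) : ℂ) := by
    rw [← Complex.ofReal_one, ← Complex.ofReal_sub]
    congr 1
    field_simp
    ring
  have h2 : (((1 / r ^ 2 : ℝ)) : ℂ) = 1 / 2 - (((r - 2) / r : ℝ) : ℂ)
      + (((r ^ 2 - 4 * r + 2) / (2 * r ^ 2) : ℝ) : ℂ) := by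
    have : (1 / r ^ 2 : ℝ) = 1 / 2 - (r - 2) / r + (r ^ 2 - 4 * r + 2) / (2 * r ^ 2) := by
      field_simp
      ring
    rw [this]
    push_cast
    ring
  rw [h1, h2]
  generalize (((r - 2) / r : ℝ) : ℂ) = a
  generalize (((r ^ 2 - 4 * r + 2) / (2 * r ^ 2) : ℝ) : ℂ) = b
  have hD : ContinuousAt (fun z : ℂ => 1 - a * z + b * z ^ 2) 0 := by fun_prop
  have hne : ∀ᶠ z : ℂ in nhds 0, 1 - a * z + b * z ^ 2 ≠ 0 :=
    hD.eventually_ne (by simp)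
  have hg : ContinuousAt (fun z : ℂ => (-(b - a / 2) - b / 2 * z) / (1 - a * z + b * z ^ 2)) 0 :=
    ContinuousAt.div (by fun_prop) hD (by simp)
  have hO := (hg.tendsto.isBigO_one ℂ).mul (isBigO_refl (fun z : ℂ => z ^ 3) (nhds 0))
  simp only [one_mul] at hO
  refine hO.congr' ?_ EventuallyEq.rfl
  filter_upwards [hne] with z hz
  rw [div_mul_eq_mul_div, div_sub' hz]
  congr 1
  ring
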